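/- Let N ≥ 1, p > 1, and α ∈ ℝ be such that N > p+α. Then for every u ∈ C_c^∞(ℝ^N), ∫_{ℝ^N} |u(x)|^p / |x|^{p+α} dx ≤ ( p/(N−p−α) )^p ∫_{ℝ^N} |∇u(x)|^p / |x|^α dx. -/

import Mathlib

open MeasureTheory Metric Set

noncomputable section

/-- The surface measure on the unit sphere `S^{N-1} ⊆ ℝ^N` induced by the Lebesgue measure. -/
def sphereMeasure (N : ℕ) : Measure (sphere (0 : EuclideanSpace ℝ (Fin N)) 1) :=
  (volume : Measure (EuclideanSpace ℝ (Fin N))).toSphere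

open Classical in
/-- Extension of a function `g` on the unit sphere to `ℝ^N` as `x ↦ g (x/|x|)`
(with junk value `0` at the origin). -/
def sphereExt {N : ℕ} (g : sphere (0 : EuclideanSpace ℝ (Fin N)) 1 → ℝ)
    (x : EuclideanSpace ℝ (Fin N)) : ℝ :=
  if hx : ‖x‖⁻¹ • x ∈ sphere (0 : EuclideanSpace ℝ (Fin N)) 1 then g ⟨‖x‖⁻¹ • x, hx⟩ else 0

/-- The `L^q(S^{N-1})` norm `(∫_{S^{N-1}} |g|^q dθ)^{1/q}`. -/
def sphereLqNorm {N : ℕ} (q : ℝ) (g : sphere (0 : EuclideanSpace ℝ (Fin N)) 1 → ℝ) : ℝ :=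
  (∫ θ, |g θ| ^ q ∂(sphereMeasure N)) ^ (1 / q)

/-- The total surface measure `|S^{N-1}|` of the unit sphere in `ℝ^N`. -/
def sphereVol (N : ℕ) : ℝ := (sphereMeasure N univ).toReal

/-!
Write `d` for the dimension and put the weight into a measure `ν = ‖x‖ ^ β dμ` with `0 < d + β`,
which a dilation by `t` rescales by a power of `t`. Integrating `∇u` along the ray from `x ≠ 0` to
infinity gives `|u x| ≤ ∫₁^∞ g (t x) dt / t` with `g x = |∇u x · x|`. The `L^p(ν)` norm of the
dilate `g (t ·)` is `t ^ (-(d + β) / p)` times that of `g`, so Minkowski's integral inequality gives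
`‖u‖ ≤ ‖g‖ ∫₁^∞ t ^ (-(d + β) / p) dt / t = p / (d + β) ‖g‖` in `L^p(ν)`. Finally
`g x ≤ |∇u x| ‖x‖`, and `β = -(p + α)` is the claim.
-/

open Function Module
open scoped ENNReal

section Minkowski

variable {X T : Type*} [MeasurableSpace X] [MeasurableSpace T] {p : ℝ}

theorem lintegral_rpow_le_lintegral_rpow_mul_lintegral {τ : Measure T} (hp : 1 ≤ p)
    {h k : T → ℝ≥0∞} (hh : AEMeasurable h τ) (hk : AEMeasurable k τ) (hk_top : ∀ᵐ t ∂τ, k t ≠ ∞)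
    (hhk : ∀ᵐ t ∂τ, k t = 0 → h t = 0) :
    (∫⁻ t, h t ∂τ) ^ p ≤ (∫⁻ t, k t ∂τ) ^ (p - 1) * ∫⁻ t, k t ^ (1 - p) * h t ^ p ∂τ := by
  have hp0 : 0 < p := by linarith
  have hfactor : ∀ᵐ t ∂τ, h t = k t ^ (1 - p⁻¹) * (k t ^ (1 - p) * h t ^ p) ^ p⁻¹ := by
    filter_upwards [hk_top, hhk] with t ht_top ht_zero
    rw [ENNReal.mul_rpow_of_nonneg _ _ (by positivity), ENNReal.rpow_rpow_inv hp0.ne']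
    rcases eq_or_ne (k t) 0 with h0 | h0
    · simp [ht_zero h0]
    · rw [← ENNReal.rpow_mul, ← mul_assoc, ← ENNReal.rpow_add _ _ h0 ht_top,
        show 1 - p⁻¹ + (1 - p) * p⁻¹ = 0 by field_simp; ring, ENNReal.rpow_zero, one_mul]
  calc (∫⁻ t, h t ∂τ) ^ p
      = (∫⁻ t, k t ^ (1 - p⁻¹) * (k t ^ (1 - p) * h t ^ p) ^ p⁻¹ ∂τ) ^ p := by
        rw [lintegral_congr_ae hfactor]
    _ ≤ ((∫⁻ t, k t ∂τ) ^ (1 - p⁻¹) * (∫⁻ t, k t ^ (1 - p) * h t ^ p ∂τ) ^ p⁻¹) ^ p := by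
        gcongr
        exact ENNReal.lintegral_mul_norm_pow_le hk (by fun_prop)
          (sub_nonneg.2 (inv_le_one_of_one_le₀ hp)) (by positivity) (by ring)
    _ = (∫⁻ t, k t ∂τ) ^ (p - 1) * ∫⁻ t, k t ^ (1 - p) * h t ^ p ∂τ := by
        rw [ENNReal.mul_rpow_of_nonneg _ _ hp0.le, ENNReal.rpow_inv_rpow hp0.ne',
          ← ENNReal.rpow_mul, show (1 - p⁻¹) * p = p - 1 by field_simp]

theorem ae_ae_eq_zero_of_lintegral_rpow_eq_zero {ν : Measure X} {τ : Measure T}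
    [SFinite ν] [SFinite τ] (hp : 0 < p) {f : X → T → ℝ≥0∞} (hf : Measurable (uncurry f)) :
    ∀ᵐ x ∂ν, ∀ᵐ t ∂τ, ∫⁻ y, f y t ^ p ∂ν = 0 → f x t = 0 := by
  rw [Measure.ae_ae_comm <| MeasurableSet.imp
    (measurableSet_eq_fun ((hf.pow_const p).lintegral_prod_left'.comp measurable_snd)
      measurable_const)
    (measurableSet_eq_fun hf measurable_const)]
  refine .of_forall fun t => Filter.eventually_imp_distrib_left.2 fun ht => ?_
  filter_upwards [(lintegral_eq_zero_iff (hf.of_uncurry_right.pow_const p)).1 ht] with x hx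
  exact (ENNReal.rpow_eq_zero_iff_of_pos hp).1 hx

theorem lintegral_minkowski_inequality {ν : Measure X} {τ : Measure T}
    [SFinite ν] [SFinite τ] (hp : 1 ≤ p) {f : X → T → ℝ≥0∞} (hf : Measurable (uncurry f)) :
    ∫⁻ x, (∫⁻ t, f x t ∂τ) ^ p ∂ν ≤ (∫⁻ t, (∫⁻ x, f x t ^ p ∂ν) ^ p⁻¹ ∂τ) ^ p := by
  have hp0 : 0 < p := by linarith
  -- Weighting Hölder in `t` by the slice norms `k t` loses nothing after Tonelli.
  set k : T → ℝ≥0∞ := fun t => (∫⁻ x, f x t ^ p ∂ν) ^ p⁻¹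
  have hk_rpow (t : T) : k t ^ p = ∫⁻ x, f x t ^ p ∂ν := ENNReal.rpow_inv_rpow hp0.ne' _
  have hk : Measurable k := (hf.pow_const p).lintegral_prod_left'.pow_const _
  rcases eq_or_ne (∫⁻ t, k t ∂τ) ∞ with h_top | h_top
  · simp [h_top, hp0]
  have hk_top : ∀ᵐ t ∂τ, k t ≠ ∞ := (ae_lt_top hk h_top).mono fun _ => ne_of_lt
  have hfk : ∀ᵐ x ∂ν, ∀ᵐ t ∂τ, k t = 0 → f x t = 0 := by
    filter_upwards [ae_ae_eq_zero_of_lintegral_rpow_eq_zero (ν := ν) (τ := τ) hp0 hf] with x hx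
    filter_upwards [hx] with t ht hkt
    exact ht (by rw [← hk_rpow, hkt, ENNReal.zero_rpow_of_pos hp0])
  have hk_cancel : ∀ᵐ t ∂τ, k t ^ (1 - p) * k t ^ p = k t := by
    filter_upwards [hk_top] with t ht
    rcases eq_or_ne (k t) 0 with h0 | h0
    · simp [h0, hp0]
    · rw [← ENNReal.rpow_add _ _ h0 ht, sub_add_cancel, ENNReal.rpow_one]
  calc ∫⁻ x, (∫⁻ t, f x t ∂τ) ^ p ∂ν
      ≤ ∫⁻ x, (∫⁻ t, k t ∂τ) ^ (p - 1) * ∫⁻ t, k t ^ (1 - p) * f x t ^ p ∂τ ∂ν := by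
        refine lintegral_mono_ae (hfk.mono fun x hx => ?_)
        exact lintegral_rpow_le_lintegral_rpow_mul_lintegral hp
          hf.of_uncurry_left.aemeasurable hk.aemeasurable hk_top hx
    _ = (∫⁻ t, k t ∂τ) ^ (p - 1) * ∫⁻ t, k t ^ (1 - p) * k t ^ p ∂τ := by
        have hmeas : Measurable (uncurry fun x t => k t ^ (1 - p) * f x t ^ p) :=
          ((hk.comp measurable_snd).pow_const _).mul (hf.pow_const p)
        rw [lintegral_const_mul _ hmeas.lintegral_prod_right,
          lintegral_lintegral_swap hmeas.aemeasurable]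
        simp_rw [hk_rpow, lintegral_const_mul _ (hf.of_uncurry_right.pow_const p)]
    _ = (∫⁻ t, k t ∂τ) ^ p := by
        rw [lintegral_congr_ae hk_cancel]
        nth_rewrite 2 [← ENNReal.rpow_one (∫⁻ t, k t ∂τ)]
        rw [← ENNReal.rpow_add_of_nonneg _ _ (by linarith) zero_le_one, sub_add_cancel]

end Minkowski

theorem lintegral_Ioi_rpow_of_lt {a c : ℝ} (ha : a < -1) (hc : 0 < c) :
    ∫⁻ t in Ioi c, ENNReal.ofReal (t ^ a) = ENNReal.ofReal (-c ^ (a + 1) / (a + 1)) := by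
  rw [← integral_Ioi_rpow_of_lt ha hc,
    ofReal_integral_eq_lintegral_ofReal (integrableOn_Ioi_rpow_of_lt ha hc)]
  filter_upwards [ae_restrict_mem measurableSet_Ioi] with t ht
  exact Real.rpow_nonneg (hc.trans ht).le _

section Ray

variable {E F : Type*} [NormedAddCommGroup E] [NormedSpace ℝ E]
  [NormedAddCommGroup F] [NormedSpace ℝ F]

theorem enorm_le_lintegral_Ioi_deriv {f : ℝ → F} (hf : ContDiff ℝ 1 f)
    (hf_supp : HasCompactSupport f) (a : ℝ) : ‖f a‖ₑ ≤ ∫⁻ t in Ioi a, ‖deriv f t‖ₑ := by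
  have hreflect := HasCompactSupport.enorm_le_lintegral_Ici_deriv (f := fun s => f (-s))
    (hf.comp contDiff_neg) (hf_supp.comp_homeomorph (Homeomorph.neg ℝ)) (-a)
  simp only [neg_neg, deriv_comp_neg, enorm_neg] at hreflect
  calc ‖f a‖ₑ ≤ ∫⁻ t in Iic (-a), ‖deriv f (-t)‖ₑ := hreflect
    _ = ∫⁻ t in Neg.neg ⁻¹' Ici a, ‖deriv f (-t)‖ₑ := by simp
    _ = ∫⁻ t in Ici a, ‖deriv f t‖ₑ :=
        (Measure.measurePreserving_neg volume).setLIntegral_comp_preimage_emb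
          (MeasurableEquiv.neg ℝ).measurableEmbedding (fun t => ‖deriv f t‖ₑ) (Ici a)
    _ = ∫⁻ t in Ioi a, ‖deriv f t‖ₑ := (setLIntegral_congr Ioi_ae_eq_Ici).symm

theorem enorm_le_lintegral_fderiv_ray {u : E → F} (hu : ContDiff ℝ 1 u)
    (hu_supp : HasCompactSupport u) {x : E} (hx : x ≠ 0) :
    ‖u x‖ₑ ≤ ∫⁻ t in Ioi (1 : ℝ), ‖fderiv ℝ u (t • x) x‖ₑ := by
  have hderiv (t : ℝ) : deriv (fun t : ℝ => u (t • x)) t = fderiv ℝ u (t • x) x := by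
    have hline : HasDerivAt (fun t : ℝ => t • x) x t := by
      simpa using (hasDerivAt_id t).smul_const x
    exact ((hu.differentiable one_ne_zero) (t • x)).hasFDerivAt.comp_hasDerivAt t hline |>.deriv
  simpa [hderiv] using enorm_le_lintegral_Ioi_deriv (f := fun t : ℝ => u (t • x))
    (hu.comp (by fun_prop)) (hu_supp.comp_isClosedEmbedding (isClosedEmbedding_smul_left hx)) 1

end Ray

theorem ofReal_integral_norm_rpow_of_hasCompactSupport {X F : Type*}
    [TopologicalSpace X] [MeasurableSpace X] [OpensMeasurableSpace X] [NormedAddCommGroup F]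
    {ν : Measure X} [IsFiniteMeasureOnCompacts ν] {p : ℝ} (hp : 0 < p)
    {f : X → F} (hf : Continuous f) (hf_supp : HasCompactSupport f) :
    ENNReal.ofReal (∫ x, ‖f x‖ ^ p ∂ν) = ∫⁻ x, ‖f x‖ₑ ^ p ∂ν := by
  have hint : Integrable (fun x => ‖f x‖ ^ p) ν :=
    (hf.norm.rpow_const fun _ => .inr hp.le).integrable_of_hasCompactSupport
      (hf_supp.norm.comp_left (g := (· ^ p)) (Real.zero_rpow hp.ne'))
  rw [ofReal_integral_eq_lintegral_ofReal hint (.of_forall fun _ => by positivity)]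
  simp_rw [← ENNReal.ofReal_rpow_of_nonneg (norm_nonneg _) hp.le, ofReal_norm]

section NormRpowMeasure

variable {E F : Type*} [NormedAddCommGroup E] [MeasurableSpace E]

/-- The measure `‖x‖ ^ β dμ(x)`. All power weights are absorbed into it; the Hardy inequality for
the weight `‖x‖ ^ (-(p + α))` is the case `β = -(p + α)`. At the origin the density follows the
`Real.rpow` convention, so it is `0` there for `β < 0`. -/
def normRpowMeasure (μ : Measure E) (β : ℝ) : Measure E :=
  μ.withDensity fun x => ENNReal.ofReal (‖x‖ ^ β)

variable [OpensMeasurableSpace E] (μ : Measure E) {β : ℝ}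

theorem lintegral_normRpowMeasure (g : E → ℝ≥0∞) :
    ∫⁻ x, g x ∂normRpowMeasure μ β = ∫⁻ x, ENNReal.ofReal (‖x‖ ^ β) * g x ∂μ :=
  lintegral_withDensity_eq_lintegral_mul_non_measurable _ (by fun_prop)
    (.of_forall fun _ => ENNReal.ofReal_lt_top) g

theorem integral_normRpowMeasure [NormedAddCommGroup F] [NormedSpace ℝ F] (g : E → F) :
    ∫ x, g x ∂normRpowMeasure μ β = ∫ x, ‖x‖ ^ β • g x ∂μ := by
  rw [normRpowMeasure, integral_withDensity_eq_integral_toReal_smul (by fun_prop)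
    (.of_forall fun _ => ENNReal.ofReal_lt_top)]
  simp_rw [ENNReal.toReal_ofReal (Real.rpow_nonneg (norm_nonneg _) β)]

end NormRpowMeasure

section Hardy

variable {E F : Type*} [NormedAddCommGroup E] [NormedSpace ℝ E] [FiniteDimensional ℝ E]
  [MeasurableSpace E] [BorelSpace E] [NormedAddCommGroup F] [NormedSpace ℝ F]
  (μ : Measure E) [μ.IsAddHaarMeasure] {p β : ℝ}

theorem lintegral_comp_smul_addHaar {t : ℝ} (ht : 0 < t) (g : E → ℝ≥0∞) :
    ∫⁻ x, g (t • x) ∂μ = ENNReal.ofReal (t ^ (-(finrank ℝ E : ℝ))) * ∫⁻ x, g x ∂μ := by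
  have hemb : MeasurableEmbedding (fun x : E => t • x) :=
    (Homeomorph.smulOfNeZero t ht.ne').measurableEmbedding
  rw [← hemb.lintegral_map, Measure.map_addHaar_smul μ ht.ne', lintegral_smul_measure,
    Real.rpow_neg ht.le, Real.rpow_natCast, abs_of_pos (by positivity), smul_eq_mul]

theorem isFiniteMeasureOnCompacts_normRpowMeasure [Nontrivial E] (hβ : 0 < finrank ℝ E + β) :
    IsFiniteMeasureOnCompacts (normRpowMeasure μ β) where
  lt_top_of_isCompact K hK := by
    have hloc : LocallyIntegrable (fun x : E => ‖x‖ ^ β) μ :=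
      locallyIntegrable_of_norm_le_rpow (C := 1) (α := -β) finrank_pos (by linarith)
        (.of_forall fun x => by simp [abs_of_nonneg (Real.rpow_nonneg (norm_nonneg x) β)])
        (measurable_norm.pow_const β).aestronglyMeasurable
    rw [normRpowMeasure, withDensity_apply _ hK.measurableSet]
    exact (hloc.integrableOn_isCompact hK).lintegral_lt_top

theorem lintegral_comp_smul_normRpowMeasure {t : ℝ} (ht : 0 < t) (g : E → ℝ≥0∞) :
    ∫⁻ x, g (t • x) ∂normRpowMeasure μ β =
      ENNReal.ofReal (t ^ (-(finrank ℝ E + β))) * ∫⁻ x, g x ∂normRpowMeasure μ β := by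
  have hweight (x : E) : ENNReal.ofReal (‖x‖ ^ β) =
      ENNReal.ofReal (t ^ (-β)) * ENNReal.ofReal (‖t • x‖ ^ β) := by
    rw [← ENNReal.ofReal_mul (by positivity), norm_smul, Real.norm_of_nonneg ht.le,
      Real.mul_rpow ht.le (norm_nonneg x), ← mul_assoc, ← Real.rpow_add ht, neg_add_cancel,
      Real.rpow_zero, one_mul]
  calc ∫⁻ x, g (t • x) ∂normRpowMeasure μ β
      = ∫⁻ x, ENNReal.ofReal (t ^ (-β)) * (ENNReal.ofReal (‖t • x‖ ^ β) * g (t • x)) ∂μ := by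
        simp only [lintegral_normRpowMeasure, ← mul_assoc, ← hweight]
    _ = ENNReal.ofReal (t ^ (-β)) * (ENNReal.ofReal (t ^ (-(finrank ℝ E : ℝ))) *
          ∫⁻ x, ENNReal.ofReal (‖x‖ ^ β) * g x ∂μ) := by
        rw [lintegral_const_mul' _ _ ENNReal.ofReal_ne_top,
          lintegral_comp_smul_addHaar μ ht fun x => ENNReal.ofReal (‖x‖ ^ β) * g x]
    _ = ENNReal.ofReal (t ^ (-(finrank ℝ E + β))) * ∫⁻ x, g x ∂normRpowMeasure μ β := by
        rw [← mul_assoc, ← ENNReal.ofReal_mul (by positivity), ← Real.rpow_add ht, neg_add_rev,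
          lintegral_normRpowMeasure]

theorem lintegral_rpow_lintegral_Ioi_comp_smul_le (hp : 1 ≤ p) (hβ : 0 < finrank ℝ E + β)
    {g : E → ℝ≥0∞} (hg : Measurable g) :
    ∫⁻ x, (∫⁻ t in Ioi (1 : ℝ), ENNReal.ofReal t⁻¹ * g (t • x)) ^ p ∂normRpowMeasure μ β ≤
      ENNReal.ofReal (p / (finrank ℝ E + β)) ^ p * ∫⁻ x, g x ^ p ∂normRpowMeasure μ β := by
  have hp0 : 0 < p := by linarith
  have : SFinite (normRpowMeasure μ β) := Measure.withDensity.instSFinite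
  set s : ℝ := finrank ℝ E + β
  set A : ℝ≥0∞ := ∫⁻ x, g x ^ p ∂normRpowMeasure μ β
  have hslice : ∀ t ∈ Ioi (1 : ℝ),
      (∫⁻ x, (ENNReal.ofReal t⁻¹ * g (t • x)) ^ p ∂normRpowMeasure μ β) ^ p⁻¹ =
        ENNReal.ofReal (t ^ (-1 - s / p)) * A ^ p⁻¹ := by
    intro t ht
    have ht0 : 0 < t := one_pos.trans ht
    simp_rw [ENNReal.mul_rpow_of_nonneg _ _ hp0.le]
    rw [lintegral_const_mul' _ _ (ENNReal.rpow_ne_top_of_nonneg hp0.le ENNReal.ofReal_ne_top),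
      lintegral_comp_smul_normRpowMeasure μ ht0 fun x => g x ^ p,
      ENNReal.mul_rpow_of_nonneg _ _ (by positivity), ENNReal.rpow_rpow_inv hp0.ne',
      ENNReal.mul_rpow_of_nonneg _ _ (by positivity),
      ENNReal.ofReal_rpow_of_pos (by positivity), ← mul_assoc,
      ← ENNReal.ofReal_mul (by positivity), ← Real.rpow_mul ht0.le, ← Real.rpow_neg_one,
      ← Real.rpow_add ht0, neg_mul, ← sub_eq_add_neg, ← div_eq_mul_inv]
  calc ∫⁻ x, (∫⁻ t in Ioi (1 : ℝ), ENNReal.ofReal t⁻¹ * g (t • x)) ^ p ∂normRpowMeasure μ β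
      ≤ (∫⁻ t in Ioi (1 : ℝ),
          (∫⁻ x, (ENNReal.ofReal t⁻¹ * g (t • x)) ^ p ∂normRpowMeasure μ β) ^ p⁻¹) ^ p :=
        lintegral_minkowski_inequality hp
          (by fun_prop : Measurable fun z : E × ℝ => ENNReal.ofReal z.2⁻¹ * g (z.2 • z.1))
    _ = (ENNReal.ofReal (p / s) * A ^ p⁻¹) ^ p := by
        have hexp : -1 - s / p < -1 := by linarith [div_pos hβ hp0]
        rw [setLIntegral_congr_fun measurableSet_Ioi hslice, lintegral_mul_const _ (by fun_prop),
          lintegral_Ioi_rpow_of_lt hexp one_pos]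
        congr 3
        rw [Real.one_rpow, sub_add_eq_add_sub, neg_add_cancel, zero_sub, neg_div_neg_eq,
          one_div_div]
    _ = ENNReal.ofReal (p / s) ^ p * A := by
        rw [ENNReal.mul_rpow_of_nonneg _ _ hp0.le, ENNReal.rpow_inv_rpow hp0.ne']

theorem lintegral_hardy_radial_fderiv [Nontrivial E] (hp : 1 ≤ p) (hβ : 0 < finrank ℝ E + β)
    {u : E → F} (hu : ContDiff ℝ 1 u) (hu_supp : HasCompactSupport u) :
    ∫⁻ x, ‖u x‖ₑ ^ p ∂normRpowMeasure μ β ≤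
      ENNReal.ofReal (p / (finrank ℝ E + β)) ^ p *
        ∫⁻ x, ‖fderiv ℝ u x x‖ₑ ^ p ∂normRpowMeasure μ β := by
  have hmeas : Measurable fun x => ‖fderiv ℝ u x x‖ₑ :=
    ((hu.continuous_fderiv one_ne_zero).clm_apply continuous_id).enorm.measurable
  refine le_trans (lintegral_mono_ae ?_) (lintegral_rpow_lintegral_Ioi_comp_smul_le μ hp hβ hmeas)
  have hne : ∀ᵐ x ∂normRpowMeasure μ β, x ≠ 0 :=
    (withDensity_absolutelyContinuous _ _).ae_le (compl_mem_ae_iff.2 (measure_singleton 0))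
  filter_upwards [hne] with x hx
  gcongr
  refine (enorm_le_lintegral_fderiv_ray hu hu_supp hx).trans_eq ?_
  refine setLIntegral_congr_fun measurableSet_Ioi fun t ht => ?_
  have ht0 : 0 < t := one_pos.trans ht
  simp only [map_smul, enorm_smul]
  rw [Real.enorm_of_nonneg ht0.le, ← mul_assoc, ← ENNReal.ofReal_mul (by positivity),
    inv_mul_cancel₀ ht0.ne', ENNReal.ofReal_one, one_mul]

theorem lintegral_hardy_fderiv [Nontrivial E] (hp : 1 ≤ p) (hβ : 0 < finrank ℝ E + β)
    {u : E → F} (hu : ContDiff ℝ 1 u) (hu_supp : HasCompactSupport u) :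
    ∫⁻ x, ‖u x‖ₑ ^ p ∂normRpowMeasure μ β ≤
      ENNReal.ofReal (p / (finrank ℝ E + β)) ^ p *
        ∫⁻ x, ‖fderiv ℝ u x‖ₑ ^ p ∂normRpowMeasure μ (β + p) := by
  have hp0 : 0 < p := by linarith
  refine (lintegral_hardy_radial_fderiv μ hp hβ hu hu_supp).trans ?_
  gcongr _ * ?_
  simp_rw [lintegral_normRpowMeasure μ]
  refine lintegral_mono fun x => ?_
  rcases eq_or_ne x 0 with rfl | hx
  · simp [hp0]
  have hx0 : 0 < ‖x‖ := norm_pos_iff.2 hx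
  calc ENNReal.ofReal (‖x‖ ^ β) * ‖fderiv ℝ u x x‖ₑ ^ p
      ≤ ENNReal.ofReal (‖x‖ ^ β) * (‖fderiv ℝ u x‖ₑ * ‖x‖ₑ) ^ p := by
        gcongr
        exact (fderiv ℝ u x).le_opENorm x
    _ = ENNReal.ofReal (‖x‖ ^ (β + p)) * ‖fderiv ℝ u x‖ₑ ^ p := by
        rw [ENNReal.mul_rpow_of_nonneg _ _ hp0.le, ← ofReal_norm x,
          ENNReal.ofReal_rpow_of_pos hx0, Real.rpow_add hx0, ENNReal.ofReal_mul (by positivity)]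
        ring

theorem integral_hardy_fderiv [Nontrivial E] (hp : 1 ≤ p) (hβ : 0 < finrank ℝ E + β)
    {u : E → F} (hu : ContDiff ℝ 1 u) (hu_supp : HasCompactSupport u) :
    ∫ x, ‖u x‖ ^ p ∂normRpowMeasure μ β ≤
      (p / (finrank ℝ E + β)) ^ p * ∫ x, ‖fderiv ℝ u x‖ ^ p ∂normRpowMeasure μ (β + p) := by
  have hp0 : 0 < p := by linarith
  have := isFiniteMeasureOnCompacts_normRpowMeasure μ hβ
  have := isFiniteMeasureOnCompacts_normRpowMeasure μ (β := β + p) (by linarith)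
  rw [← ENNReal.ofReal_le_ofReal_iff (by positivity), ENNReal.ofReal_mul (by positivity),
    ← ENNReal.ofReal_rpow_of_pos (by positivity),
    ofReal_integral_norm_rpow_of_hasCompactSupport hp0 hu.continuous hu_supp,
    ofReal_integral_norm_rpow_of_hasCompactSupport hp0 (hu.continuous_fderiv one_ne_zero)
      (hu_supp.fderiv ℝ)]
  exact lintegral_hardy_fderiv μ hp hβ hu hu_supp

theorem sharp_weighted_hardy_CKN_general [Nontrivial E] {p α : ℝ} (hp : 1 ≤ p)
    (hα : p + α < finrank ℝ E) {u : E → F} (hu : ContDiff ℝ 1 u) (hu_supp : HasCompactSupport u) :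
    ∫ x, ‖u x‖ ^ p / ‖x‖ ^ (p + α) ∂μ ≤
      (p / (finrank ℝ E - p - α)) ^ p * ∫ x, ‖fderiv ℝ u x‖ ^ p / ‖x‖ ^ α ∂μ := by
  have hweight (a γ : ℝ) (x : E) : a / ‖x‖ ^ γ = ‖x‖ ^ (-γ) • a := by
    rw [Real.rpow_neg (norm_nonneg x), smul_eq_mul, inv_mul_eq_div]
  have hardy := integral_hardy_fderiv μ hp (β := -(p + α)) (by linarith) hu hu_supp
  simp_rw [hweight, ← integral_normRpowMeasure]
  convert hardy using 3 <;> ring_nf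

end Hardy

theorem sharp_weighted_hardy_CKN
    (N : ℕ) (hN : 1 ≤ N) (p α : ℝ) (hp : 1 < p) (hα : p + α < N)
    (u : EuclideanSpace ℝ (Fin N) → ℝ) (hu : ContDiff ℝ (⊤ : ℕ∞) u) (husupp : HasCompactSupport u) :
    ∫ x : EuclideanSpace ℝ (Fin N), |u x| ^ p / ‖x‖ ^ (p + α) ≤
      (p / ((N : ℝ) - p - α)) ^ p * ∫ x : EuclideanSpace ℝ (Fin N), ‖fderiv ℝ u x‖ ^ p / ‖x‖ ^ α := by
  have : NeZero N := ⟨by omega⟩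
  simpa using sharp_weighted_hardy_CKN_general volume hp.le (by simpa using hα)
    (hu.of_le (by exact_mod_cast le_top)) husupp

end
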